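/- Let a, b be real numbers with 0 < a ≤ 1 and b ≥ 1, and let X be a random variable whose law has density f(x) = x^{a−1}·(1−x)^{b−1}/Z on (0,1) (and 0 elsewhere) with respect to Lebesgue measure, where Z = ∫_0^1 x^{a−1}(1−x)^{b−1} dx is the normalizing constant (so X is Beta(a,b)-distributed). Then for every integer S ≥ 2, E[ |X − 1/S| ] ≥ 1/(6S). -/

import Mathlib

open MeasureTheory

/-!
If `f` is nonincreasing on `(0, ∞)` and `0 < k < c`, then `φ x = |x - c| - k` changes sign from `+`
to `-` at `c - k` and back to `+` at `c + k`. Monotonicity of `f` gives `φ * f ≥ φ * f (c - k)` on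
`(0, c + k]`, and `φ * f ≥ 0` beyond, so `∫ φ * f ≥ f (c - k) * ∫ x in 0..(c + k), φ x`, where the
last integral is `(2 * c ^ 2 - (c + k) ^ 2) / 2`. It vanishes for `k = (√2 - 1) * c`, whence
`E|X - c| ≥ (√2 - 1) * c` whenever `X` has density `f`, with equality for `X` uniform on
`(0, √2 * c)`. The density of `Beta(a, b)` is nonincreasing on `(0, ∞)` when `a ≤ 1 ≤ b`, and
`√2 - 1 ≥ 1 / 6`.
-/

open Set ProbabilityTheory

section AntitoneDensity

variable {f : ℝ → ℝ}

lemma intervalIntegral_mul_le_setIntegral_mul_of_antitoneOn {φ : ℝ → ℝ} {l p q : ℝ} (hlp : l < p)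
    (hpq : p ≤ q) (hf : AntitoneOn f (Ioi l)) (hf_nonneg : ∀ x ∈ Ioi l, 0 ≤ f x)
    (hφ_left : ∀ x ∈ Ioc l p, 0 ≤ φ x) (hφ_mid : ∀ x ∈ Ioc p q, φ x ≤ 0)
    (hφ_right : ∀ x ∈ Ioi q, 0 ≤ φ x) (hφ : IntervalIntegrable φ volume l q)
    (hφf : IntegrableOn (fun x ↦ φ x * f x) (Ioi l)) :
    (∫ x in l..q, φ x) * f p ≤ ∫ x in Ioi l, φ x * f x := by
  have hlq : l ≤ q := hlp.le.trans hpq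
  have hφf_near : IntegrableOn (fun x ↦ φ x * f x) (Ioc l q) := hφf.mono_set Ioc_subset_Ioi_self
  have hφf_far : IntegrableOn (fun x ↦ φ x * f x) (Ioi q) := hφf.mono_set (Ioi_subset_Ioi hlq)
  have near_le : ∀ x ∈ Ioc l q, φ x * f p ≤ φ x * f x := by
    intro x hx
    rcases le_or_gt x p with hxp | hpx
    · exact mul_le_mul_of_nonneg_left (hf hx.1 hlp hxp) (hφ_left x ⟨hx.1, hxp⟩)
    · exact mul_le_mul_of_nonpos_left (hf hlp hx.1 hpx.le) (hφ_mid x ⟨hpx, hx.2⟩)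
  have far_nonneg : 0 ≤ ∫ x in Ioi q, φ x * f x :=
    setIntegral_nonneg measurableSet_Ioi fun x hx ↦
      mul_nonneg (hφ_right x hx) (hf_nonneg x (hlq.trans_lt hx))
  calc (∫ x in l..q, φ x) * f p
      = ∫ x in Ioc l q, φ x * f p := by
        rw [intervalIntegral.integral_of_le hlq, integral_mul_const]
    _ ≤ ∫ x in Ioc l q, φ x * f x :=
        setIntegral_mono_on (hφ.1.mul_const _) hφf_near measurableSet_Ioc near_le
    _ ≤ (∫ x in Ioc l q, φ x * f x) + ∫ x in Ioi q, φ x * f x :=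
        le_add_of_nonneg_right far_nonneg
    _ = ∫ x in Ioi l, φ x * f x := by
        rw [← setIntegral_union (Ioc_disjoint_Ioi le_rfl) measurableSet_Ioi hφf_near hφf_far,
          Ioc_union_Ioi_eq_Ioi hlq]

lemma intervalIntegral_abs_sub {l c r : ℝ} (hlc : l ≤ c) (hcr : c ≤ r) :
    ∫ x in l..r, |x - c| = ((c - l) ^ 2 + (r - c) ^ 2) / 2 := by
  have left : ∫ x in l..c, |x - c| = (c - l) ^ 2 / 2 := by
    have := integral_pow_abs_sub_uIoc (a := c) (b := l) (n := 1)
    rw [uIoc_of_ge hlc, ← intervalIntegral.integral_of_le hlc] at this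
    simpa [abs_sub_comm l c, sq_abs, one_add_one_eq_two] using this
  have right : ∫ x in c..r, |x - c| = (r - c) ^ 2 / 2 := by
    have := integral_pow_abs_sub_uIoc (a := c) (b := r) (n := 1)
    rw [uIoc_of_le hcr, ← intervalIntegral.integral_of_le hcr] at this
    simpa [sq_abs, one_add_one_eq_two] using this
  have hint (s t : ℝ) : IntervalIntegrable (fun x ↦ |x - c|) volume s t :=
    Continuous.intervalIntegrable (by fun_prop) s t
  rw [← intervalIntegral.integral_add_adjacent_intervals (hint l c) (hint c r), left, right]
  ring

lemma integrable_abs_sub_mul {ν : Measure ℝ} (hf : Integrable f ν)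
    (hxf : Integrable (fun x ↦ x * f x) ν) (c : ℝ) : Integrable (fun x ↦ |x - c| * f x) ν := by
  have h : Integrable (fun x ↦ (x - c) * f x) ν :=
    (hxf.sub (hf.const_mul c)).congr <| ae_of_all _ fun x ↦ (sub_mul x c (f x)).symm
  refine h.mono (AEStronglyMeasurable.mul (by fun_prop) hf.1) (ae_of_all _ fun x ↦ ?_)
  rw [norm_mul, norm_mul, Real.norm_eq_abs |x - c|, abs_abs, Real.norm_eq_abs (x - c)]

lemma mul_integral_le_integral_abs_sub_mul_of_antitoneOn {c k : ℝ} (hf : AntitoneOn f (Ioi 0))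
    (hf_nonneg : ∀ x ∈ Ioi 0, 0 ≤ f x) (hf_int : IntegrableOn f (Ioi 0))
    (hxf_int : IntegrableOn (fun x ↦ x * f x) (Ioi 0)) (hc : 0 < c) (hk : 0 ≤ k)
    (hck : (c + k) ^ 2 ≤ 2 * c ^ 2) :
    k * ∫ x in Ioi 0, f x ≤ ∫ x in Ioi 0, |x - c| * f x := by
  have hkc : k < c := by nlinarith
  have habs_int := integrable_abs_sub_mul hf_int hxf_int c
  have crossing : (∫ x in 0..(c + k), (|x - c| - k)) * f (c - k) ≤
      ∫ x in Ioi 0, (|x - c| - k) * f x := by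
    refine intervalIntegral_mul_le_setIntegral_mul_of_antitoneOn (sub_pos.2 hkc) (by linarith) hf
      hf_nonneg (fun x hx ↦ ?_) (fun x hx ↦ ?_) (fun x hx ↦ ?_)
      (Continuous.intervalIntegrable (by fun_prop) _ _) ?_
    · linarith [neg_le_abs (x - c), hx.2]
    · exact sub_nonpos.2 (abs_le.2 ⟨by linarith [hx.1], by linarith [hx.2]⟩)
    · linarith [le_abs_self (x - c), mem_Ioi.1 hx]
    · exact (habs_int.sub (hf_int.const_mul k)).congr <| ae_of_all _ fun x ↦
        (sub_mul |x - c| k (f x)).symm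
  have excess_nonneg : 0 ≤ ∫ x in 0..(c + k), (|x - c| - k) := by
    rw [intervalIntegral.integral_sub (Continuous.intervalIntegrable (by fun_prop) _ _) (by simp),
      intervalIntegral_abs_sub hc.le (by linarith), intervalIntegral.integral_const, smul_eq_mul]
    linarith
  have key : 0 ≤ ∫ x in Ioi 0, (|x - c| - k) * f x :=
    (mul_nonneg excess_nonneg (hf_nonneg _ (sub_pos.2 hkc))).trans crossing
  simp only [sub_mul] at key
  rwa [integral_sub habs_int (hf_int.const_mul k), integral_const_mul, sub_nonneg] at key

theorem sqrt_two_sub_one_mul_integral_le_integral_abs_sub_mul_of_antitoneOn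
    (hf : AntitoneOn f (Ioi 0)) (hf_nonneg : ∀ x ∈ Ioi 0, 0 ≤ f x) (hf_int : IntegrableOn f (Ioi 0))
    (hxf_int : IntegrableOn (fun x ↦ x * f x) (Ioi 0)) (c : ℝ) :
    (√2 - 1) * c * ∫ x in Ioi 0, f x ≤ ∫ x in Ioi 0, |x - c| * f x := by
  have hsqrt : 0 ≤ √2 - 1 := sub_nonneg.2 (Real.one_le_sqrt.2 one_le_two)
  rcases le_or_gt c 0 with hc | hc
  · calc (√2 - 1) * c * ∫ x in Ioi 0, f x
        ≤ 0 := mul_nonpos_of_nonpos_of_nonneg (mul_nonpos_of_nonneg_of_nonpos hsqrt hc)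
          (setIntegral_nonneg measurableSet_Ioi hf_nonneg)
      _ ≤ ∫ x in Ioi 0, |x - c| * f x := setIntegral_nonneg measurableSet_Ioi fun x hx ↦
          mul_nonneg (abs_nonneg _) (hf_nonneg x hx)
  · refine mul_integral_le_integral_abs_sub_mul_of_antitoneOn hf hf_nonneg hf_int hxf_int hc
      (mul_nonneg hsqrt hc.le) (le_of_eq ?_)
    rw [show c + (√2 - 1) * c = √2 * c by ring, mul_pow, Real.sq_sqrt zero_le_two]

end AntitoneDensity

section Beta

variable {a b : ℝ}

lemma betaPDFReal_eq_indicator (a b : ℝ) :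
    betaPDFReal a b =
      indicator (Ioo 0 1) fun x ↦ x ^ (a - 1) * (1 - x) ^ (b - 1) / beta a b := by
  ext x
  simp only [betaPDFReal, indicator, mem_Ioo]
  congr 1
  ring

lemma betaPDFReal_nonneg (ha : 0 < a) (hb : 0 < b) (x : ℝ) : 0 ≤ betaPDFReal a b x := by
  by_cases hx : 0 < x ∧ x < 1
  · exact (betaPDFReal_pos hx.1 hx.2 ha hb).le
  · exact (if_neg hx).ge

lemma antitoneOn_betaPDFReal (ha : 0 < a) (ha1 : a ≤ 1) (hb : 1 ≤ b) :
    AntitoneOn (betaPDFReal a b) (Ioi 0) := by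
  have hb0 : 0 < b := zero_lt_one.trans_le hb
  intro x (hx : 0 < x) y hy hxy
  rcases lt_or_ge y 1 with hy1 | hy1
  · have hx1 : x < 1 := hxy.trans_lt hy1
    rw [betaPDFReal, betaPDFReal, if_pos ⟨hy, hy1⟩, if_pos ⟨hx, hx1⟩]
    have := beta_pos ha hb0
    have hy1' : 0 ≤ 1 - y := sub_nonneg.2 hy1.le
    gcongr ?_ * ?_ * ?_
    · exact Real.rpow_le_rpow_of_nonpos hx hxy (sub_nonpos.2 ha1)
    · exact Real.rpow_le_rpow hy1' (by linarith) (sub_nonneg.2 hb)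
  · calc betaPDFReal a b y = 0 := if_neg fun h ↦ h.2.not_ge hy1
      _ ≤ betaPDFReal a b x := betaPDFReal_nonneg ha hb0 x

lemma integrable_betaPDFReal (ha : 0 < a) (hb : 0 < b) : Integrable (betaPDFReal a b) := by
  refine ⟨by fun_prop, (hasFiniteIntegral_iff_ofReal (ae_of_all _ (betaPDFReal_nonneg ha hb))).2 ?_⟩
  exact (lintegral_betaPDF_eq_one ha hb).trans_lt ENNReal.one_lt_top

lemma integrable_mul_betaPDFReal (ha : 0 < a) (hb : 0 < b) :
    Integrable fun x ↦ x * betaPDFReal a b x := by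
  refine (integrable_betaPDFReal ha hb).mono (by fun_prop) (ae_of_all _ fun x ↦ ?_)
  by_cases hx : 0 < x ∧ x < 1
  · rw [norm_mul]
    exact mul_le_of_le_one_left (norm_nonneg _) (abs_le.2 ⟨by linarith, hx.2.le⟩)
  · simp only [betaPDFReal, if_neg hx, mul_zero, le_refl]

lemma integral_betaMeasure (ha : 0 < a) (hb : 0 < b) (g : ℝ → ℝ) :
    ∫ x, g x ∂betaMeasure a b = ∫ x in Ioi 0, g x * betaPDFReal a b x := by
  have hpdf_zero : ∀ x ∉ Ioi (0 : ℝ), g x * betaPDFReal a b x = 0 := fun x hx ↦ by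
    rw [betaPDFReal, if_neg fun h ↦ hx h.1, mul_zero]
  have hpdf_meas : Measurable (betaPDF a b) := (measurable_betaPDFReal a b).ennreal_ofReal
  rw [setIntegral_eq_integral_of_forall_compl_eq_zero hpdf_zero, betaMeasure,
    integral_withDensity_eq_integral_toReal_smul hpdf_meas
      (ae_of_all _ fun _ ↦ ENNReal.ofReal_lt_top)]
  simp only [betaPDF, ENNReal.toReal_ofReal (betaPDFReal_nonneg ha hb _), smul_eq_mul, mul_comm]

lemma integral_betaPDFReal (ha : 0 < a) (hb : 0 < b) : ∫ x in Ioi 0, betaPDFReal a b x = 1 := by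
  have := isProbabilityMeasureBeta ha hb
  simpa using (integral_betaMeasure ha hb fun _ ↦ 1).symm

lemma setIntegral_Ioo_rpow_mul_one_sub_rpow (ha : 0 < a) (hb : 0 < b) :
    ∫ x in Ioo (0 : ℝ) 1, x ^ (a - 1) * (1 - x) ^ (b - 1) = beta a b := by
  have h := integral_betaPDFReal ha hb
  rwa [betaPDFReal_eq_indicator, setIntegral_indicator measurableSet_Ioo,
    inter_eq_self_of_subset_right Ioo_subset_Ioi_self, integral_div,
    div_eq_one_iff_eq (beta_pos ha hb).ne'] at h

theorem sqrt_two_sub_one_mul_le_integral_abs_sub_betaMeasure (ha : 0 < a) (ha1 : a ≤ 1)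
    (hb : 1 ≤ b) (c : ℝ) : (√2 - 1) * c ≤ ∫ x, |x - c| ∂betaMeasure a b := by
  have hb0 : 0 < b := zero_lt_one.trans_le hb
  rw [integral_betaMeasure ha hb0]
  simpa only [integral_betaPDFReal ha hb0, mul_one] using
    sqrt_two_sub_one_mul_integral_le_integral_abs_sub_mul_of_antitoneOn
      (antitoneOn_betaPDFReal ha ha1 hb) (fun x _ ↦ betaPDFReal_nonneg ha hb0 x)
      (integrable_betaPDFReal ha hb0).integrableOn
      (integrable_mul_betaPDFReal ha hb0).integrableOn c

end Beta

theorem stmt9_general (a b : ℝ) (ha0 : 0 < a) (ha1 : a ≤ 1) (hb : 1 ≤ b)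
    (Z : ℝ) (hZ : Z = ∫ x in Set.Ioo (0 : ℝ) 1, x ^ (a - 1) * (1 - x) ^ (b - 1))
    (μ : Measure ℝ)
    (hμ : μ = volume.withDensity (fun x => ENNReal.ofReal
      (Set.indicator (Set.Ioo (0 : ℝ) 1) (fun x => x ^ (a - 1) * (1 - x) ^ (b - 1) / Z) x)))
    (c : ℝ) :
    (√2 - 1) * c ≤ ∫ x, |x - c| ∂μ := by
  have hμ_beta : μ = betaMeasure a b := by
    rw [hμ, hZ, setIntegral_Ioo_rpow_mul_one_sub_rpow ha0 (zero_lt_one.trans_le hb),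
      ← betaPDFReal_eq_indicator]
    rfl
  exact hμ_beta ▸ sqrt_two_sub_one_mul_le_integral_abs_sub_betaMeasure ha0 ha1 hb c

lemma one_sixth_le_sqrt_two_sub_one : 1 / 6 ≤ √2 - 1 :=
  le_sub_iff_add_le.2 (Real.le_sqrt_of_sq_le (by norm_num))

/-- Quantified counterexample in Appendix A of the paper (refuting Lemma C.1 of
Agrawal & Jia 2017): if `X` is `Beta(a,b)`-distributed with `0 < a ≤ 1 ≤ b`, then for every
integer `S ≥ 2`, `E[|X - 1/S|] ≥ 1/(6S)`. The law of `X` is given as the measure with density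
`x^(a-1) * (1-x)^(b-1) / Z` on `(0,1)` with respect to Lebesgue measure. -/
theorem stmt9 (a b : ℝ) (ha0 : 0 < a) (ha1 : a ≤ 1) (hb : 1 ≤ b)
    (Z : ℝ) (hZ : Z = ∫ x in Set.Ioo (0 : ℝ) 1, x ^ (a - 1) * (1 - x) ^ (b - 1))
    (μ : Measure ℝ)
    (hμ : μ = volume.withDensity (fun x => ENNReal.ofReal
      (Set.indicator (Set.Ioo (0 : ℝ) 1) (fun x => x ^ (a - 1) * (1 - x) ^ (b - 1) / Z) x)))
    (S : ℕ) (hS : 2 ≤ S) :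
    1 / (6 * S) ≤ ∫ x, |x - 1 / S| ∂μ := by
  calc 1 / (6 * S) = 1 / 6 * (1 / (S : ℝ)) := (one_div_mul_one_div ..).symm
    _ ≤ (√2 - 1) * (1 / S) := by gcongr; exact one_sixth_le_sqrt_two_sub_one
    _ ≤ ∫ x, |x - 1 / S| ∂μ := stmt9_general a b ha0 ha1 hb Z hZ μ hμ (1 / S)
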